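/- (Recursive formula for ∞-adic multiple zeta values.) Let r ≥ 1 and m_1,…,m_r ∈ ℤ_{≥0}. Then in A: ζ_∞(−m_1,…,−m_r) = Σ_{l=0}^{r} (−1)^l · ζ_{<d}(−m_{l+1},…,−m_r) · [ Σ_{(a_1,…,a_l)} v^{a_1+⋯+a_l} · ζ_{<d}(−(m_1−a_1)) ⋯ ζ_{<d}(−(m_l−a_l)) · C(m_1,a_1) ⋯ C(m_l,a_l) · ζ_∞(−a_1,…,−a_l) ], where the inner sum runs over all integer tuples (a_1,…,a_l) with 0 ≤ a_j < m_j and (q−1) | (m_j − a_j) for all 1 ≤ j ≤ l (an empty sum if some m_j = 0 for j ≤ l), and the l = 0 summand is ζ_{<d}(−m_1,…,−m_r). -/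

import Mathlib

open Polynomial

/-- The power sum `S_i(-m)`: the sum of `n ^ m` over monic polynomials `n` of degree `i`. -/
noncomputable def powerSum (F : Type*) [Field F] [Fintype F] (i m : ℕ) : Polynomial F :=
  ∑ᶠ n ∈ {n : Polynomial F | n.Monic ∧ n.natDegree = i}, n ^ m

/-- The restricted power sum `S̃_i(-m)`: the sum of `n ^ m` over monic polynomials `n` of
degree `i` not divisible by `v`. -/
noncomputable def powerSumV (F : Type*) [Field F] [Fintype F] (v : Polynomial F) (i m : ℕ) :
    Polynomial F :=
  ∑ᶠ n ∈ {n : Polynomial F | n.Monic ∧ n.natDegree = i ∧ ¬ v ∣ n}, n ^ m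

/-- `ζ_∞(-m_1, …, -m_r)`, the ∞-adic multiple zeta value at nonpositive integers:
the sum over `i_1 > ⋯ > i_r ≥ 0` of `S_{i_1}(-m_1) ⋯ S_{i_r}(-m_r)`.
Only `m 0, …, m (r-1)` are used.  The depth-0 value is `1`. -/
noncomputable def zetaInf (F : Type*) [Field F] [Fintype F] (r : ℕ) (m : ℕ → ℕ) :
    Polynomial F :=
  ∑ᶠ i ∈ {i : Fin r → ℕ | StrictAnti i}, ∏ j : Fin r, powerSum F (i j) (m (j : ℕ))

/-- `ζ⋆_∞(-m_1, …, -m_r)`, the ∞-adic multiple zeta star value at nonpositive integers: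
the sum over `i_1 ≥ ⋯ ≥ i_r ≥ 0` of `S_{i_1}(-m_1) ⋯ S_{i_r}(-m_r)`. -/
noncomputable def zetaInfStar (F : Type*) [Field F] [Fintype F] (r : ℕ) (m : ℕ → ℕ) :
    Polynomial F :=
  ∑ᶠ i ∈ {i : Fin r → ℕ | Antitone i}, ∏ j : Fin r, powerSum F (i j) (m (j : ℕ))

/-- `ζ_v(-m_1, …, -m_r)`, the v-adic multiple zeta value at nonpositive integers. -/
noncomputable def zetaV (F : Type*) [Field F] [Fintype F] (v : Polynomial F) (r : ℕ)
    (m : ℕ → ℕ) : Polynomial F :=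
  ∑ᶠ i ∈ {i : Fin r → ℕ | StrictAnti i}, ∏ j : Fin r, powerSumV F v (i j) (m (j : ℕ))

/-- `ζ⋆_v(-m_1, …, -m_r)`, the v-adic multiple zeta star value at nonpositive integers. -/
noncomputable def zetaVStar (F : Type*) [Field F] [Fintype F] (v : Polynomial F) (r : ℕ)
    (m : ℕ → ℕ) : Polynomial F :=
  ∑ᶠ i ∈ {i : Fin r → ℕ | Antitone i}, ∏ j : Fin r, powerSumV F v (i j) (m (j : ℕ))

/-- `ζ_{<d}(-m_1, …, -m_r)`, the truncated multiple zeta value: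
the sum over `d > i_1 > ⋯ > i_r ≥ 0` of `S_{i_1}(-m_1) ⋯ S_{i_r}(-m_r)`. -/
noncomputable def zetaLt (F : Type*) [Field F] [Fintype F] (d r : ℕ) (m : ℕ → ℕ) :
    Polynomial F :=
  ∑ᶠ i ∈ {i : Fin r → ℕ | StrictAnti i ∧ ∀ j, i j < d},
    ∏ j : Fin r, powerSum F (i j) (m (j : ℕ))

/-- `ζ⋆_{<d}(-m_1, …, -m_r)`, the truncated multiple zeta star value. -/
noncomputable def zetaLtStar (F : Type*) [Field F] [Fintype F] (d r : ℕ) (m : ℕ → ℕ) :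
    Polynomial F :=
  ∑ᶠ i ∈ {i : Fin r → ℕ | Antitone i ∧ ∀ j, i j < d},
    ∏ j : Fin r, powerSum F (i j) (m (j : ℕ))

/-- `ζ_{<d}(-m)`, the depth-one truncated zeta value `Σ_{d > i ≥ 0} S_i(-m)`. -/
noncomputable def zetaLtOne (F : Type*) [Field F] [Fintype F] (d m : ℕ) : Polynomial F :=
  ∑ᶠ i ∈ {i : ℕ | i < d}, powerSum F i m

/-!
Euclidean division by `v` writes a monic polynomial of degree `d + i` uniquely as `v k + s` with
`k` monic of degree `i` and `deg s < d`. Expanding `(v k + s) ^ m` and summing over `s` leaves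
the sums `∑ s, s ^ b` with `b = m - a`. Every nonzero `s` is uniquely a unit times a monic
polynomial, and the `b`-th powers of the units add up to `-1` or `0`, so for `b > 0` this sum is
`-ζ_{<d}(-b)` if `q - 1` divides `b` and vanishes otherwise; for `b = 0` it is `q ^ d = 0`. Hence
`S_{d+i}(-m)` is a linear combination of the `S_i(-a)` with `a < m`. The formula follows by
splitting the sum defining `ζ_∞` according to the number `l` of indices that are at least `d` and
expanding the power sums at these `l` indices.
-/

open Finset

section NestedSum

variable {R : Type*}

/-- The nested sum of `f 0 i_1 * ⋯ * f (r - 1) i_r` over `N > i_1 > ⋯ > i_r ≥ 0`, the common shape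
of multiple zeta values and their truncations. -/
def nestedSum [CommSemiring R] {r : ℕ} (f : Fin r → ℕ → R) (N : ℕ) : R :=
  ∑ i ∈ Fintype.piFinset fun _ : Fin r => range N with StrictAnti i, ∏ j, f j (i j)

lemma strictAnti_fin_cons {α : Type*} [Preorder α] {r : ℕ} {a : α} {i : Fin r → α} :
    StrictAnti (Fin.cons a i : Fin (r + 1) → α) ↔ (∀ j, i j < a) ∧ StrictAnti i := by
  constructor
  · exact fun h => ⟨fun j => by simpa using h j.succ_pos,
      fun j k hjk => by simpa using h (Fin.succ_lt_succ_iff.2 hjk)⟩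
  · rintro ⟨hlt, hanti⟩ j k hjk
    cases k using Fin.cases with
    | zero => exact absurd hjk j.not_lt_zero
    | succ k =>
      cases j using Fin.cases with
      | zero => simpa using hlt k
      | succ j => simpa using hanti (Fin.succ_lt_succ_iff.1 hjk)

section CommSemiring

variable [CommSemiring R]

@[simp]
lemma nestedSum_depth_zero (f : Fin 0 → ℕ → R) (N : ℕ) : nestedSum f N = 1 := by
  simp [nestedSum, Subsingleton.strictAnti]

lemma nestedSum_succ {r : ℕ} (f : Fin (r + 1) → ℕ → R) (N : ℕ) :
    nestedSum f N = ∑ a ∈ range N, f 0 a * nestedSum (fun j => f j.succ) a := by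
  simp only [nestedSum, mul_sum, sum_sigma']
  refine sum_bij' (fun i _ => ⟨i 0, Fin.tail i⟩) (fun x _ => Fin.cons x.1 x.2) ?_ ?_ ?_ ?_ ?_
  · intro i hi
    rw [← Fin.cons_self_tail i] at hi
    simp only [mem_filter, Fintype.mem_piFinset, mem_range, strictAnti_fin_cons] at hi
    simpa using ⟨hi.1 0, hi.2⟩
  · rintro ⟨a, i⟩ h
    simp only [mem_sigma, mem_filter, Fintype.mem_piFinset, mem_range] at h
    obtain ⟨ha, hlt, hanti⟩ := h
    simpa [Fin.forall_fin_succ, strictAnti_fin_cons, ha, hlt, hanti]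
      using fun j => (hlt j).trans ha
  · simp
  · simp
  · simp [Fin.prod_univ_succ, Fin.tail]

lemma nestedSum_add (r : ℕ) (f : ℕ → ℕ → R) (d N : ℕ) :
    nestedSum (fun j : Fin r => f j) (d + N) =
      ∑ p ∈ antidiagonal r, nestedSum (fun (j : Fin p.1) i => f j (d + i)) N *
        nestedSum (fun j : Fin p.2 => f (p.1 + j)) d := by
  induction r generalizing f N with
  | zero => simp
  | succ r ih =>
    have first_index_ge : ∑ p ∈ antidiagonal r,
          nestedSum (fun (j : Fin (p.1 + 1)) i => f j (d + i)) N *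
            nestedSum (fun j : Fin p.2 => f (p.1 + 1 + j)) d =
        ∑ i ∈ range N, f 0 (d + i) * nestedSum (fun j : Fin r => f (j + 1)) (d + i) := by
      simp only [ih fun j => f (j + 1), nestedSum_succ, Fin.val_succ, Fin.val_zero, mul_sum,
        sum_mul, mul_assoc, Nat.add_right_comm _ 1]
      rw [sum_comm]
    rw [Nat.sum_antidiagonal_succ, first_index_ge, nestedSum_succ, sum_range_add]
    simp [nestedSum_succ]

lemma nestedSum_const_mul {r : ℕ} (c : Fin r → R) (f : Fin r → ℕ → R) (N : ℕ) :
    nestedSum (fun j i => c j * f j i) N = (∏ j, c j) * nestedSum f N := by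
  simp only [nestedSum, prod_mul_distrib, mul_sum]

lemma nestedSum_sum {ι : Type*} {r : ℕ} (A : Fin r → Finset ι) (f : Fin r → ι → ℕ → R) (N : ℕ) :
    nestedSum (fun j i => ∑ a ∈ A j, f j a i) N =
      ∑ a ∈ Fintype.piFinset A, nestedSum (fun j => f j (a j)) N := by
  simp only [nestedSum, prod_univ_sum]
  exact sum_comm

end CommSemiring

lemma nestedSum_neg [CommRing R] {r : ℕ} (f : Fin r → ℕ → R) (N : ℕ) :
    nestedSum (fun j i => -f j i) N = (-1) ^ r * nestedSum f N := by
  simp [nestedSum, prod_neg, mul_sum]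

end NestedSum

lemma finsum_mem_eq_sum_piFinset_extend {M N : Type*} [Zero M] [AddCommMonoid N] (l : ℕ)
    (A : ℕ → Finset M) (G : (ℕ → M) → N) :
    ∑ᶠ a ∈ {a : ℕ → M | (∀ j < l, a j ∈ A j) ∧ ∀ j, l ≤ j → a j = 0}, G a =
      ∑ a ∈ Fintype.piFinset fun j : Fin l => A j, G (Function.extend Fin.val a 0) := by
  have extend_of_le (a : Fin l → M) {j : ℕ} (hj : l ≤ j) : Function.extend Fin.val a 0 j = 0 :=
    Function.extend_apply' _ _ _ fun ⟨k, hk⟩ => (hk ▸ k.is_lt).not_ge hj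
  have image_extend : {a : ℕ → M | (∀ j < l, a j ∈ A j) ∧ ∀ j, l ≤ j → a j = 0} =
      (fun a => Function.extend Fin.val a 0) ''
        (Fintype.piFinset (fun j : Fin l => A j) : Set (Fin l → M)) := by
    ext b
    constructor
    · rintro ⟨hb, hb0⟩
      refine ⟨fun j => b j, by simpa using fun j : Fin l => hb j j.is_lt, funext fun j => ?_⟩
      obtain hj | hj := lt_or_ge j l
      · exact Fin.val_injective.extend_apply _ _ ⟨j, hj⟩
      · exact (extend_of_le _ hj).trans (hb0 j hj).symm
    · rintro ⟨a, ha, rfl⟩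
      refine ⟨fun j hj => ?_, fun j => extend_of_le a⟩
      have extend_val := Fin.val_injective.extend_apply a 0 ⟨j, hj⟩
      simpa [extend_val] using Fintype.mem_piFinset.1 ha ⟨j, hj⟩
  rw [image_extend, finsum_mem_image (Function.extend_injective Fin.val_injective 0).injOn,
    finsum_mem_coe_finset]

section PolynomialFinsets

section Semiring

variable (R : Type*) [Semiring R] [Finite R]

lemma finite_degreeLT (d : ℕ) : (degreeLT R d : Set R[X]).Finite :=
  have := Finite.of_equiv _ (degreeLTEquiv R d).toEquiv.symm
  Set.toFinite _

/-- The polynomials of degree less than `d`, as a finset: the remainders of division by a monic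
polynomial of degree `d`. -/
noncomputable def degreeLTFinset (d : ℕ) : Finset R[X] := (finite_degreeLT R d).toFinset

variable {R} in
@[simp]
lemma mem_degreeLTFinset {d : ℕ} {p : R[X]} : p ∈ degreeLTFinset R d ↔ p.degree < d := by
  simp [degreeLTFinset, mem_degreeLT]

lemma card_degreeLTFinset (d : ℕ) : #(degreeLTFinset R d) = Nat.card R ^ d := by
  rw [degreeLTFinset, ← Set.ncard_eq_toFinset_card _ (finite_degreeLT R d), ← Nat.card_coe_set_eq]
  simpa [Nat.card_fun] using Nat.card_congr (degreeLTEquiv R d).toEquiv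

lemma finite_monic_natDegree_eq (i : ℕ) : {n : R[X] | n.Monic ∧ n.natDegree = i}.Finite :=
  (finite_degreeLT R (i + 1)).subset fun _ hn => mem_degreeLT.2 <|
    degree_le_natDegree.trans_lt (mod_cast hn.2 ▸ i.lt_succ_self)

/-- The monic polynomials of degree `i`, as a finset: the index set of `S_i`. -/
noncomputable def monicFinset (i : ℕ) : Finset R[X] := (finite_monic_natDegree_eq R i).toFinset

variable {R} in
@[simp]
lemma mem_monicFinset {i : ℕ} {n : R[X]} : n ∈ monicFinset R i ↔ n.Monic ∧ n.natDegree = i := by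
  simp [monicFinset]

end Semiring

lemma natCast_card_degreeLTFinset (R : Type*) [Ring R] [Finite R] {d : ℕ} (hd : d ≠ 0) :
    (#(degreeLTFinset R d) : R) = 0 := by
  have := Fintype.ofFinite R
  rw [card_degreeLTFinset, Nat.card_eq_fintype_card, Nat.cast_pow, Nat.cast_card_eq_zero,
    zero_pow hd]

lemma sum_monicFinset_natDegree_add {R M : Type*} [CommRing R] [Nontrivial R] [Finite R]
    [AddCommMonoid M] {v : R[X]} (hv : v.Monic) (i : ℕ) (f : R[X] → M) :
    ∑ n ∈ monicFinset R (v.natDegree + i), f n =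
      ∑ k ∈ monicFinset R i, ∑ s ∈ degreeLTFinset R v.natDegree, f (v * k + s) := by
  rw [← sum_product']
  refine sum_bij' (fun n _ => (n /ₘ v, n %ₘ v)) (fun x _ => v * x.1 + x.2) ?_ ?_ ?_ ?_ ?_
  · intro n hn
    obtain ⟨hn, hdeg⟩ := mem_monicFinset.1 hn
    have hle : v.degree ≤ n.degree := by
      rw [degree_eq_natDegree hv.ne_zero, degree_eq_natDegree hn.ne_zero, hdeg]
      exact mod_cast Nat.le_add_right _ _
    simp only [mem_product, mem_monicFinset, mem_degreeLTFinset, natDegree_divByMonic n hv, hdeg,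
      Nat.add_sub_cancel_left, and_true, ← degree_eq_natDegree hv.ne_zero]
    exact ⟨(leadingCoeff_divByMonic_of_monic hv hle).trans hn, degree_modByMonic_lt n hv⟩
  · rintro ⟨k, s⟩ h
    simp only [mem_product, mem_monicFinset, mem_degreeLTFinset] at h
    obtain ⟨⟨hk, rfl⟩, hs⟩ := h
    have hdeg : (v * k).natDegree = v.natDegree + k.natDegree := hv.natDegree_mul hk
    have hlt : s.degree < (v * k).degree := by
      rw [degree_eq_natDegree (hv.mul hk).ne_zero, hdeg]
      exact hs.trans_le (mod_cast Nat.le_add_right _ _)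
    exact mem_monicFinset.2 ⟨(hv.mul hk).add_of_left hlt,
      (natDegree_add_eq_left_of_degree_lt hlt).trans hdeg⟩
  · intro n _
    rw [add_comm, modByMonic_add_div]
  · rintro ⟨k, s⟩ h
    simp only [mem_product, mem_degreeLTFinset, ← degree_eq_natDegree hv.ne_zero] at h
    obtain ⟨hdiv, hmod⟩ := div_modByMonic_unique k s hv ⟨add_comm s (v * k), h.2⟩
    simp [hdiv, hmod]
  · intro n _
    rw [add_comm, modByMonic_add_div]

lemma sum_degreeLTFinset_eq_sum_units {F M : Type*} [Field F] [Fintype F] [DecidableEq F]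
    [AddCommMonoid M] (d : ℕ) (f : F[X] → M) :
    ∑ s ∈ degreeLTFinset F d, f s =
      f 0 + ∑ i ∈ range d, ∑ n ∈ monicFinset F i, ∑ u : Fˣ, f (C (u : F) * n) := by
  rw [← add_sum_erase (degreeLTFinset F d) f (a := 0) (by simp)]
  simp only [← sum_product', sum_sigma']
  congr 1
  refine sum_bij'
    (fun s hs => ⟨s.natDegree, s * C s.leadingCoeff⁻¹,
      Units.mk0 s.leadingCoeff (leadingCoeff_ne_zero.2 (ne_of_mem_erase hs))⟩)
    (fun x _ => C (x.2.2 : F) * x.2.1) ?_ ?_ ?_ ?_ ?_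
  · intro s hs
    have hs0 : s ≠ 0 := ne_of_mem_erase hs
    have hdeg : s.degree < d := mem_degreeLTFinset.1 (mem_of_mem_erase hs)
    simp [monic_mul_leadingCoeff_inv hs0, natDegree_mul_leadingCoeff_self_inv,
      (natDegree_lt_iff_degree_lt hs0).2 hdeg]
  · rintro ⟨i, n, u⟩ h
    simp only [mem_sigma, mem_range, mem_product, mem_monicFinset, mem_univ, and_true] at h
    obtain ⟨hi, hn, rfl⟩ := h
    simp [degree_C_mul u.ne_zero, hn.ne_zero, (natDegree_lt_iff_degree_lt hn.ne_zero).1 hi]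
  · intro s hs
    have hlc : s.leadingCoeff ≠ 0 := leadingCoeff_ne_zero.2 (ne_of_mem_erase hs)
    simp [mul_left_comm, ← C_mul, hlc]
  · rintro ⟨i, n, u⟩ h
    simp only [mem_sigma, mem_product, mem_monicFinset] at h
    obtain ⟨-, ⟨hn, rfl⟩, -⟩ := h
    have cancel : C (u : F) * n * C (u : F)⁻¹ = n := by
      rw [mul_right_comm, ← C_mul, mul_inv_cancel₀ u.ne_zero, C_1, one_mul]
    simp [natDegree_C_mul u.ne_zero, hn.leadingCoeff, cancel]
  · intro s hs
    have hlc : s.leadingCoeff ≠ 0 := leadingCoeff_ne_zero.2 (ne_of_mem_erase hs)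
    simp [mul_left_comm, ← C_mul, hlc]

end PolynomialFinsets

/-- The exponents `a` that occur in the expansion of `S_{d+i}(-m)` in terms of the `S_i(-a)` over
the field with `q` elements. -/
def recursionExponents (q m : ℕ) : Finset ℕ := {a ∈ range m | q - 1 ∣ m - a}

@[simp]
lemma mem_recursionExponents {q m a : ℕ} :
    a ∈ recursionExponents q m ↔ a < m ∧ q - 1 ∣ m - a := by
  simp [recursionExponents]

section PowerSum

variable (F : Type*) [Field F] [Fintype F]

lemma powerSum_eq_sum (i m : ℕ) : powerSum F i m = ∑ n ∈ monicFinset F i, n ^ m := by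
  rw [powerSum, monicFinset, finsum_mem_eq_finite_toFinset_sum]

lemma zetaLtOne_eq_sum (d m : ℕ) : zetaLtOne F d m = ∑ i ∈ range d, powerSum F i m := by
  rw [zetaLtOne, ← finsum_mem_coe_finset, coe_range, Set.Iio_def]

lemma sum_degreeLTFinset_pow (d : ℕ) {b : ℕ} (hb : b ≠ 0) :
    ∑ s ∈ degreeLTFinset F d, s ^ b =
      if Fintype.card F - 1 ∣ b then -zetaLtOne F d b else 0 := by
  classical
  have sum_units : ∑ u : Fˣ, C (u : F) ^ b = if Fintype.card F - 1 ∣ b then (-1 : F[X]) else 0 := by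
    simpa [apply_ite] using congrArg C (FiniteField.sum_pow_units F b)
  rw [sum_degreeLTFinset_eq_sum_units, zero_pow hb, zero_add]
  simp only [mul_pow, ← sum_mul, sum_units, ← mul_sum, ← powerSum_eq_sum, ← zetaLtOne_eq_sum]
  split_ifs <;> simp

lemma sum_degreeLTFinset_add_pow {d : ℕ} (hd : d ≠ 0) (x : F[X]) (m : ℕ) :
    ∑ s ∈ degreeLTFinset F d, (x + s) ^ m = -∑ a ∈ recursionExponents (Fintype.card F) m,
      x ^ a * (zetaLtOne F d (m - a) * (m.choose a : F[X])) := by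
  calc ∑ s ∈ degreeLTFinset F d, (x + s) ^ m
    _ = ∑ a ∈ range (m + 1), x ^ a * (∑ s ∈ degreeLTFinset F d, s ^ (m - a)) * m.choose a := by
      simp only [add_pow, mul_sum, sum_mul]
      exact sum_comm
    _ = ∑ a ∈ range m, x ^ a * (∑ s ∈ degreeLTFinset F d, s ^ (m - a)) * m.choose a := by
      have card_eq_zero : (#(degreeLTFinset F d) : F[X]) = 0 := by
        rw [← C_eq_natCast, natCast_card_degreeLTFinset F hd, C_0]
      simp [sum_range_succ, card_eq_zero]
    _ = _ := by
      rw [recursionExponents, sum_filter, ← sum_neg_distrib]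
      refine sum_congr rfl fun a ha => ?_
      rw [sum_degreeLTFinset_pow F d (Nat.sub_ne_zero_of_lt (mem_range.1 ha))]
      split_ifs <;> ring

lemma powerSum_natDegree_add {v : F[X]} (hv : v.Monic) (hd : 0 < v.natDegree) (i m : ℕ) :
    powerSum F (v.natDegree + i) m = -∑ a ∈ recursionExponents (Fintype.card F) m,
      v ^ a * (zetaLtOne F v.natDegree (m - a) * (m.choose a : F[X])) * powerSum F i a := by
  simp only [powerSum_eq_sum, sum_monicFinset_natDegree_add hv,
    sum_degreeLTFinset_add_pow F hd.ne', sum_neg_distrib, mul_pow, mul_sum]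
  rw [sum_comm]
  simp only [mul_right_comm]

lemma powerSum_eq_zero_of_lt {i m : ℕ} (h : m < i) : powerSum F i m = 0 := by
  induction m using Nat.strong_induction_on generalizing i with
  | _ m ih =>
    -- The recursion with `v = X` lowers both the degree and the exponent.
    obtain ⟨i, rfl⟩ := Nat.exists_eq_add_of_lt (Nat.zero_lt_of_lt h)
    have recursion := powerSum_natDegree_add F monic_X (by simp) i m
    rw [natDegree_X] at recursion
    rw [zero_add, add_comm, recursion, neg_eq_zero]
    refine sum_eq_zero fun a ha => ?_
    have ham : a < m := (mem_recursionExponents.1 ha).1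
    rw [ih a ham (by omega), mul_zero]

end PowerSum

section Zeta

variable (F : Type*) [Field F] [Fintype F]

lemma zetaLt_eq_nestedSum (d r : ℕ) (m : ℕ → ℕ) :
    zetaLt F d r m = nestedSum (fun (j : Fin r) i => powerSum F i (m j)) d := by
  rw [zetaLt, nestedSum, ← finsum_mem_coe_finset]
  simp [and_comm]

lemma zetaInf_eq_nestedSum {r N : ℕ} {m : ℕ → ℕ} (hN : ∀ j : Fin r, m j < N) :
    zetaInf F r m = nestedSum (fun (j : Fin r) i => powerSum F i (m j)) N := by
  rw [zetaInf, nestedSum, ← finsum_mem_coe_finset]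
  refine finsum_mem_inter_support_eq' _ _ _ fun i hi => ?_
  suffices ∀ j, i j < N by simp [this]
  intro j
  by_contra! hj
  exact hi (prod_eq_zero (mem_univ j) (powerSum_eq_zero_of_lt F ((hN j).trans_le hj)))

lemma nestedSum_powerSum_natDegree_add {v : F[X]} (hv : v.Monic) (hd : 0 < v.natDegree) {l N : ℕ}
    {m : ℕ → ℕ} (hN : ∀ j : Fin l, m j < N) :
    nestedSum (fun (j : Fin l) i => powerSum F (v.natDegree + i) (m j)) N =
      (-1) ^ l * ∑ᶠ a ∈ {a : ℕ → ℕ |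
          (∀ j < l, a j < m j ∧ (Fintype.card F - 1) ∣ (m j - a j)) ∧ ∀ j, l ≤ j → a j = 0},
        v ^ (∑ j ∈ range l, a j) *
          (∏ j ∈ range l,
            zetaLtOne F v.natDegree (m j - a j) * (Nat.choose (m j) (a j) : F[X])) *
          zetaInf F l a := by
  simp only [powerSum_natDegree_add F hv hd, nestedSum_neg, nestedSum_sum, nestedSum_const_mul,
    ← mem_recursionExponents]
  rw [finsum_mem_eq_sum_piFinset_extend l fun j => recursionExponents (Fintype.card F) (m j)]
  refine congrArg _ (sum_congr rfl fun a ha => ?_)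
  have extend_val (j : Fin l) : Function.extend Fin.val a 0 j = a j :=
    Fin.val_injective.extend_apply a 0 j
  have ha_lt (j : Fin l) : Function.extend Fin.val a 0 j < N := by
    rw [extend_val]
    exact (mem_recursionExponents.1 (Fintype.mem_piFinset.1 ha j)).1.trans (hN j)
  simp only [zetaInf_eq_nestedSum F ha_lt, prod_range, sum_range, extend_val, prod_mul_distrib,
    prod_pow_eq_pow_sum]

end Zeta

theorem zetaInf_recursive_general (F : Type*) [Field F] [Fintype F] {v : F[X]} (hv : v.Monic)
    (hd : 0 < v.natDegree) (r : ℕ) (m : ℕ → ℕ) :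
    zetaInf F r m =
      ∑ l ∈ range (r + 1),
        (-1 : F[X]) ^ l * zetaLt F v.natDegree (r - l) (fun j => m (l + j)) *
          ∑ᶠ a ∈ {a : ℕ → ℕ |
              (∀ j < l, a j < m j ∧ (Fintype.card F - 1) ∣ (m j - a j)) ∧
                ∀ j, l ≤ j → a j = 0},
            v ^ (∑ j ∈ range l, a j) *
              (∏ j ∈ range l,
                zetaLtOne F v.natDegree (m j - a j) * (Nat.choose (m j) (a j) : F[X])) *
              zetaInf F l a := by
  obtain ⟨N, hN⟩ : ∃ N, ∀ j < r, m j < N :=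
    ⟨(range r).sup m + 1, fun j hj => Nat.lt_succ_of_le (le_sup (mem_range.2 hj))⟩
  have hdN (j : Fin r) : m j < v.natDegree + N := (hN j j.is_lt).trans_le (Nat.le_add_left _ _)
  rw [zetaInf_eq_nestedSum F hdN, nestedSum_add r fun j i => powerSum F i (m j),
    Nat.sum_antidiagonal_eq_sum_range_succ_mk]
  refine sum_congr rfl fun l hl => ?_
  have hlr : l ≤ r := Nat.lt_succ_iff.1 (mem_range.1 hl)
  rw [nestedSum_powerSum_natDegree_add F hv hd fun j => hN j (j.is_lt.trans_le hlr),
    zetaLt_eq_nestedSum, mul_right_comm]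

/-- Recursive formula for ∞-adic multiple zeta values at negative integers.
The inner sum runs over tuples `(a_1, …, a_l)` (encoded as functions `a : ℕ → ℕ`
vanishing from index `l` on) with `0 ≤ a_j < m_j` and `(q-1) ∣ (m_j - a_j)`. -/
theorem zetaInf_recursive (F : Type*) [Field F] [Fintype F] (v : Polynomial F)
    (hv : v.Monic) (hvirr : Irreducible v) (hd : 0 < v.natDegree) (r : ℕ) (hr : 1 ≤ r)
    (m : ℕ → ℕ) :
    zetaInf F r m =
      ∑ l ∈ Finset.range (r + 1),
        (-1 : Polynomial F) ^ l * zetaLt F v.natDegree (r - l) (fun j => m (l + j)) *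
          ∑ᶠ a ∈ {a : ℕ → ℕ |
              (∀ j < l, a j < m j ∧ (Fintype.card F - 1) ∣ (m j - a j)) ∧
                ∀ j, l ≤ j → a j = 0},
            v ^ (∑ j ∈ Finset.range l, a j) *
              (∏ j ∈ Finset.range l,
                zetaLtOne F v.natDegree (m j - a j) * (Nat.choose (m j) (a j) : Polynomial F)) *
              zetaInf F l a :=
  zetaInf_recursive_general F hv hd r m
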